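/- arXiv:2311.18205 — 4 statements merged into one kernel-verified Lean document; each statement's English description precedes it below -/
import Mathlib

section
/- Let Ω ⊆ ℝ^N be open, let q ≥ p ≥ 2 be reals, and let u, v : Ω → ℝ be C² functions with u > 0 and v > 0 on Ω that satisfy −Δu + u = v^{p−1} and −Δv + v = u^{q−1} pointwise on Ω. Set l = p/q ∈ (0,1], τ = l^{−1/q}, and w = u − τ·v^l. Then at every point x ∈ Ω at which w(x) ≥ 0, one has Δw(x) ≥ w(x). -/
open Set

/-- The Laplacian of `f : ℝ^N → ℝ` at `x`: the sum of the second partial derivatives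
in the coordinate directions. -/
noncomputable def lap {N : ℕ} (f : EuclideanSpace ℝ (Fin N) → ℝ)
    (x : EuclideanSpace ℝ (Fin N)) : ℝ :=
  ∑ i : Fin N,
    fderiv ℝ (fun y => fderiv ℝ f y (EuclideanSpace.single i 1)) x
      (EuclideanSpace.single i 1)

/-!
Concavity of `t ↦ t ^ l` gives `Δ (v ^ l) ≤ l v ^ (l - 1) Δ v`, hence
`Δ w ≥ u - τ l v ^ l + (τ l v ^ (l - 1) u ^ (q - 1) - v ^ (p - 1))`. The constant `τ` is chosen so
that the bracket vanishes when `u = τ v ^ l`; it is therefore nonnegative where `w ≥ 0`, and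
`l ≤ 1` finishes the proof.
-/

section SecondDerivative

variable {𝕜 E F G : Type*} [NontriviallyNormedField 𝕜] [NormedAddCommGroup E] [NormedSpace 𝕜 E]
  [NormedAddCommGroup F] [NormedSpace 𝕜 F] [NormedAddCommGroup G] [NormedSpace 𝕜 G] {x : E}

theorem differentiableAt_fderiv_of_contDiffAt_two {f : E → F} (hf : ContDiffAt 𝕜 2 f x) :
    DifferentiableAt 𝕜 (fderiv 𝕜 f) x :=
  (hf.fderiv_right (m := 1) (by norm_num)).differentiableAt one_ne_zero

theorem fderiv_fderiv_comp_apply {g : F → G} {f : E → F} (hg : ContDiffAt 𝕜 2 g (f x))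
    (hf : ContDiffAt 𝕜 2 f x) (a b : E) :
    fderiv 𝕜 (fderiv 𝕜 (g ∘ f)) x a b =
      fderiv 𝕜 g (f x) (fderiv 𝕜 (fderiv 𝕜 f) x a b) +
        fderiv 𝕜 (fderiv 𝕜 g) (f x) (fderiv 𝕜 f x a) (fderiv 𝕜 f x b) := by
  have fderiv_comp_eventuallyEq : fderiv 𝕜 (g ∘ f) =ᶠ[nhds x]
      fun y ↦ (fderiv 𝕜 g (f y)).comp (fderiv 𝕜 f y) := by
    filter_upwards [hf.eventually (by simp), hf.continuousAt.eventually (hg.eventually (by simp))]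
      with y hfy hgy
    exact fderiv_comp y (hgy.differentiableAt two_ne_zero) (hfy.differentiableAt two_ne_zero)
  have hf' := (differentiableAt_fderiv_of_contDiffAt_two hf).hasFDerivAt
  have hg' : HasFDerivAt (fun y ↦ fderiv 𝕜 g (f y)) _ x :=
    (differentiableAt_fderiv_of_contDiffAt_two hg).hasFDerivAt.comp x
      (hf.differentiableAt two_ne_zero).hasFDerivAt
  rw [fderiv_comp_eventuallyEq.fderiv_eq, (hg'.clm_comp hf').fderiv]
  simp

theorem fderiv_fderiv_apply_apply_eq_smul_deriv_deriv {g : 𝕜 → F} {t : 𝕜}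
    (hg : ContDiffAt 𝕜 2 g t) (a b : 𝕜) :
    fderiv 𝕜 (fderiv 𝕜 g) t a b = (a * b) • deriv (deriv g) t := by
  have deriv_deriv : deriv (deriv g) t = deriv (fderiv 𝕜 g) t 1 := by
    change deriv (fun y ↦ fderiv 𝕜 g y 1) t = _
    rw [deriv_clm_apply (differentiableAt_fderiv_of_contDiffAt_two hg) (differentiableAt_const 1)]
    simp
  calc fderiv 𝕜 (fderiv 𝕜 g) t a b = a • deriv (fderiv 𝕜 g) t (b • 1) := by
        rw [fderiv_eq_smul_deriv, smul_apply, smul_eq_mul, mul_one]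
    _ = (a * b) • deriv (deriv g) t := by rw [map_smul, ← deriv_deriv, mul_smul]

end SecondDerivative

section Power

variable {p q l τ s t : ℝ}

theorem rpow_sub_one_eq_mul_rpow (hp : 0 < p) (hq : 0 < q) (ht : 0 < t) (hl : l = p / q)
    (hτ : τ = l ^ (-(1 / q))) :
    t ^ (p - 1) = τ * l * t ^ (l - 1) * (τ * t ^ l) ^ (q - 1) := by
  have hl₀ : 0 < l := hl ▸ div_pos hp hq
  have hτ₀ : 0 < τ := hτ ▸ Real.rpow_pos_of_pos hl₀ _
  have l_mul_τ_rpow : l * (τ * τ ^ (q - 1)) = 1 := by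
    rw [← Real.rpow_one_add' hτ₀.le (by simpa using hq.ne'), add_sub_cancel, hτ,
      ← Real.rpow_mul hl₀.le, neg_mul, one_div_mul_cancel hq.ne', Real.rpow_neg_one,
      mul_inv_cancel₀ hl₀.ne']
  have t_rpow : t ^ (l - 1) * (t ^ l) ^ (q - 1) = t ^ (p - 1) := by
    rw [← Real.rpow_mul ht.le, ← Real.rpow_add ht, hl]
    congr 1
    field_simp
    ring
  rw [Real.mul_rpow hτ₀.le (by positivity), ← t_rpow]
  linear_combination (-(t ^ (l - 1) * (t ^ l) ^ (q - 1))) * l_mul_τ_rpow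

theorem rpow_sub_one_le_mul_rpow (hp : 0 < p) (hq : 1 ≤ q) (ht : 0 < t) (hl : l = p / q)
    (hτ : τ = l ^ (-(1 / q))) (hs : τ * t ^ l ≤ s) :
    t ^ (p - 1) ≤ τ * l * t ^ (l - 1) * s ^ (q - 1) := by
  have hq₀ : 0 < q := by linarith
  have hl₀ : 0 < l := hl ▸ div_pos hp hq₀
  have hτ₀ : 0 < τ := hτ ▸ Real.rpow_pos_of_pos hl₀ _
  rw [rpow_sub_one_eq_mul_rpow hp hq₀ ht hl hτ]
  gcongr

end Power

section Laplacian

open InnerProductSpace Laplacian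

variable {E : Type*} [NormedAddCommGroup E] [InnerProductSpace ℝ E] [FiniteDimensional ℝ E] {x : E}

theorem laplacian_eq_sum_fderiv_fderiv {F ι : Type*} [NormedAddCommGroup F] [NormedSpace ℝ F]
    [Fintype ι] (f : E → F) (b : OrthonormalBasis ι ℝ E) (x : E) :
    Δ f x = ∑ i, fderiv ℝ (fderiv ℝ f) x (b i) (b i) := by
  simp [laplacian_eq_iteratedFDeriv_orthonormalBasis f b, iteratedFDeriv_two_apply]

theorem lap_eq_laplacian {N : ℕ} {f : EuclideanSpace ℝ (Fin N) → ℝ}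
    {x : EuclideanSpace ℝ (Fin N)} (hf : ContDiffAt ℝ 2 f x) : lap f x = Δ f x := by
  have hf' := differentiableAt_fderiv_of_contDiffAt_two hf
  simp [lap, laplacian_eq_sum_fderiv_fderiv f (EuclideanSpace.basisFun (Fin N) ℝ) x,
    fderiv_clm_apply hf' (differentiableAt_const _)]

theorem laplacian_comp {F : Type*} [NormedAddCommGroup F] [NormedSpace ℝ F] {g : ℝ → F}
    {f : E → ℝ} (hg : ContDiffAt ℝ 2 g (f x)) (hf : ContDiffAt ℝ 2 f x) :
    Δ (g ∘ f) x =
      Δ f x • deriv g (f x) + ‖fderiv ℝ f x‖ ^ 2 • deriv (deriv g) (f x) := by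
  let b := stdOrthonormalBasis ℝ E
  simp only [laplacian_eq_sum_fderiv_fderiv _ b, fderiv_fderiv_comp_apply hg hf,
    fderiv_fderiv_apply_apply_eq_smul_deriv_deriv hg, fderiv_eq_smul_deriv (f := g),
    Finset.sum_add_distrib, ← Finset.sum_smul, b.norm_dual, ← pow_two]

theorem laplacian_rpow_const {v : E → ℝ} (hv : ContDiffAt ℝ 2 v x) (hvx : v x ≠ 0) (l : ℝ) :
    Δ (fun y ↦ v y ^ l) x =
      l * v x ^ (l - 1) * Δ v x + l * (l - 1) * v x ^ (l - 2) * ‖fderiv ℝ v x‖ ^ 2 := by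
  have hg : ContDiffAt ℝ 2 (fun t : ℝ ↦ t ^ l) (v x) := contDiffAt_id.rpow_const_of_ne hvx
  have deriv_deriv : deriv (deriv fun t : ℝ ↦ t ^ l) (v x) = l * (l - 1) * v x ^ (l - 2) := by
    simp only [Real.deriv_rpow_const', deriv_const_mul_field, Real.deriv_rpow_const]
    ring_nf
  have chain := laplacian_comp hg hv
  rw [deriv_deriv, Real.deriv_rpow_const] at chain
  simp only [smul_eq_mul] at chain
  exact chain.trans (by ring)

theorem laplacian_rpow_const_le {v : E → ℝ} (hv : ContDiffAt ℝ 2 v x) (hvx : 0 < v x) {l : ℝ}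
    (hl₀ : 0 ≤ l) (hl₁ : l ≤ 1) :
    Δ (fun y ↦ v y ^ l) x ≤ l * v x ^ (l - 1) * Δ v x := by
  have gradient_term_nonneg : 0 ≤ l * (1 - l) * v x ^ (l - 2) * ‖fderiv ℝ v x‖ ^ 2 := by
    have := sub_nonneg.2 hl₁
    positivity
  linarith [laplacian_rpow_const hv hvx.ne' l]

theorem stmt_3_general {p q : ℝ} (hp : 0 < p) (hq : 1 ≤ q) (hpq : p ≤ q) {u v w : E → ℝ}
    (hu : ContDiffAt ℝ 2 u x) (hv : ContDiffAt ℝ 2 v x) (hvx : 0 < v x)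
    (hu_sub : -Δ u x + u x ≤ v x ^ (p - 1)) (hv_super : u x ^ (q - 1) ≤ -Δ v x + v x)
    {l τ : ℝ} (hl : l = p / q) (hτ : τ = l ^ (-(1 / q)))
    (hw : ∀ y, w y = u y - τ * v y ^ l) (hwx : 0 ≤ w x) :
    w x ≤ Δ w x := by
  have hq₀ : 0 < q := by linarith
  have hl₀ : 0 < l := hl ▸ div_pos hp hq₀
  have hl₁ : l ≤ 1 := hl ▸ (div_le_one hq₀).2 hpq
  have hτ₀ : 0 < τ := hτ ▸ Real.rpow_pos_of_pos hl₀ _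
  have hvl : ContDiffAt ℝ 2 (fun y ↦ v y ^ l) x := hv.rpow_const_of_ne hvx.ne'
  have hτvl : ContDiffAt ℝ 2 (τ • fun y ↦ v y ^ l) x := hvl.const_smul τ
  have laplacian_w : Δ w x = Δ u x - τ * Δ (fun y ↦ v y ^ l) x := by
    rw [show w = u - τ • fun y ↦ v y ^ l from funext hw,
      hu.laplacian_sub hτvl, laplacian_smul τ hvl, smul_eq_mul]
  have reaction_le : v x ^ (p - 1) ≤ τ * l * v x ^ (l - 1) * u x ^ (q - 1) :=
    rpow_sub_one_le_mul_rpow hp hq hvx hl hτ (by linarith [hw x])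
  have rpow_l : v x ^ (l - 1) * v x = v x ^ l := by
    rw [← Real.rpow_add_one hvx.ne', sub_add_cancel]
  calc w x = u x - τ * v x ^ l := hw x
    _ ≤ u x - τ * (l * v x ^ l) := by
      gcongr; exact mul_le_of_le_one_left (by positivity) hl₁
    _ ≤ (u x - v x ^ (p - 1)) - τ * (l * v x ^ (l - 1) * (v x - u x ^ (q - 1))) := by
      rw [← rpow_l]; linarith
    _ ≤ Δ u x - τ * (l * v x ^ (l - 1) * Δ v x) := by gcongr <;> linarith
    _ ≤ Δ u x - τ * Δ (fun y ↦ v y ^ l) x := by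
      gcongr; exact laplacian_rpow_const_le hv hvx hl₀.le hl₁
    _ = Δ w x := laplacian_w.symm

end Laplacian

/-- for positive `C²` solutions of `−Δu + u = v^(p−1)`, `−Δv + v = u^(q−1)`
on an open set `Ω`, with `l = p/q`, `τ = l^(−1/q)`, `w = u − τ·v^l`, one has
`Δw(x) ≥ w(x)` at every `x ∈ Ω` where `w(x) ≥ 0`. -/
theorem stmt_3 {N : ℕ} (Ω : Set (EuclideanSpace ℝ (Fin N))) (hΩ : IsOpen Ω)
    (p q : ℝ) (hp : 2 ≤ p) (hpq : p ≤ q)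
    (u v : EuclideanSpace ℝ (Fin N) → ℝ)
    (hu : ContDiffOn ℝ 2 u Ω) (hv : ContDiffOn ℝ 2 v Ω)
    (hupos : ∀ x ∈ Ω, 0 < u x) (hvpos : ∀ x ∈ Ω, 0 < v x)
    (heq1 : ∀ x ∈ Ω, -lap u x + u x = v x ^ (p - 1))
    (heq2 : ∀ x ∈ Ω, -lap v x + v x = u x ^ (q - 1))
    (l τ : ℝ) (hl : l = p / q) (hτ : τ = l ^ (-(1 / q)))
    (w : EuclideanSpace ℝ (Fin N) → ℝ)
    (hw : ∀ x, w x = u x - τ * v x ^ l) :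
    ∀ x ∈ Ω, 0 ≤ w x → w x ≤ lap w x := by
  intro x hx hwx
  have hux := hu.contDiffAt (hΩ.mem_nhds hx)
  have hvx := hv.contDiffAt (hΩ.mem_nhds hx)
  have hwx' : ContDiffAt ℝ 2 w x := by
    rw [funext hw]
    exact hux.sub (contDiffAt_const.mul (hvx.rpow_const_of_ne (hvpos x hx).ne'))
  rw [lap_eq_laplacian hwx']
  exact stmt_3_general (by linarith) (by linarith) hpq hux hvx (hvpos x hx)
    (lap_eq_laplacian hux ▸ (heq1 x hx).le) (lap_eq_laplacian hvx ▸ (heq2 x hx).ge) hl hτ hw hwx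
end

section
/- Let N ≥ 2 be an integer, R > 0, and q ≥ p ≥ 2 reals. Suppose u, v : ℝ^N → ℝ are C² on A_R, continuous on closure(A_R), strictly positive on A_R, vanish on the boundary sphere {|x| = R}, satisfy u(x) → 0 and v(x) → 0 as |x| → ∞, and solve −Δu + u = v^{p−1} and −Δv + v = u^{q−1} pointwise in A_R. Assume moreover that v and |∇v| are square-integrable on A_R and that x ↦ u(x)^{q−1}·v(x) is integrable on A_R. Then ∫_{A_R} (|∇v|² + v²) dx ≤ sqrt(q/p) · ∫_{A_R} v^{(p+2)/2}·u^{(q−2)/2} dx, where the right-hand side is interpreted as the (possibly infinite) Lebesgue integral of a nonnegative function. -/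
open Set Filter MeasureTheory
open scoped ENNReal

/-!
With `s = q / p` and `d ^ p = s`, the function `w = u ^ s - d v` satisfies `lap w ≥ w` wherever it
is positive, and `w ≤ u ^ s → 0` at the boundary and at infinity, so the maximum principle gives
`w ≤ 0`, that is `u ^ q ≤ (q / p) v ^ p`. Testing the equation of `v` against `v` bounds the energy
by `∫ u ^ (q - 1) v`, and the comparison, used in the form `u ^ (q / 2) ≤ √(q / p) v ^ (p / 2)`,
bounds this integrand pointwise. Since `v` need not have compact support, the test function is
`φ' ∘ v`, where `φ` is a truncation of `t ^ 2 / 2` near `t = 0`: the Laplacian of the compactly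
supported `φ ∘ v` is `φ''(v) |∇v| ^ 2 + φ'(v) lap v` and has integral zero, and Fatou's lemma
removes the truncation.
-/

open scoped Topology

section DirectionalDerivatives

lemma deriv_deriv_nonpos_of_isLocalMax {g : ℝ → ℝ} {t : ℝ} (hg : ContinuousAt g t)
    (hmax : IsLocalMax g t) : deriv (deriv g) t ≤ 0 := by
  by_contra! hpos
  have hmin : IsLocalMin g t := isLocalMin_of_deriv_deriv_pos hpos hmax.deriv_eq_zero hg
  have hconst : g =ᶠ[𝓝 t] fun _ => g t := by
    filter_upwards [hmax, hmin] with τ hle hge using le_antisymm hle hge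
  have hderiv : deriv g =ᶠ[𝓝 t] fun _ => 0 := by simpa using hconst.deriv
  exact hpos.ne' (by simpa using hderiv.deriv_eq)

variable {E : Type*} [NormedAddCommGroup E] [NormedSpace ℝ E] {f : E → ℝ} {x : E}

lemma contDiffAt_fderiv_apply (hf : ContDiffAt ℝ 2 f x) (e : E) :
    ContDiffAt ℝ 1 (fun y => fderiv ℝ f y e) x :=
  (hf.fderiv_right (m := 1) (by norm_num)).clm_apply contDiffAt_const

lemma contDiff_fderiv_apply (hf : ContDiff ℝ 2 f) (e : E) : ContDiff ℝ 1 fun x => fderiv ℝ f x e :=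
  contDiff_iff_contDiffAt.2 fun _ => contDiffAt_fderiv_apply hf.contDiffAt e

lemma eventually_differentiableAt (hf : ContDiffAt ℝ 2 f x) :
    ∀ᶠ y in 𝓝 x, DifferentiableAt ℝ f y :=
  (hf.eventually (by simp)).mono fun _ hy => hy.differentiableAt (by norm_num)

lemma deriv_deriv_comp_add_smul (hf : ContDiffAt ℝ 2 f x) (e : E) :
    deriv (deriv fun t : ℝ => f (x + t • e)) 0 = fderiv ℝ (fun y => fderiv ℝ f y e) x e := by
  have hline (t : ℝ) : HasDerivAt (fun t : ℝ => x + t • e) e t := by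
    simpa using ((hasDerivAt_id t).smul_const e).const_add x
  have htendsto : Tendsto (fun t : ℝ => x + t • e) (𝓝 0) (𝓝 x) := by
    simpa using (hline 0).continuousAt.tendsto
  have hfirst : (deriv fun t : ℝ => f (x + t • e)) =ᶠ[𝓝 0] fun t => fderiv ℝ f (x + t • e) e := by
    filter_upwards [htendsto.eventually (eventually_differentiableAt hf)] with t ht
    exact (ht.hasFDerivAt.comp_hasDerivAt t (hline t)).deriv
  have hsecond : DifferentiableAt ℝ (fun y => fderiv ℝ f y e) (x + (0 : ℝ) • e) := by
    simpa using (contDiffAt_fderiv_apply hf e).differentiableAt one_ne_zero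
  rw [hfirst.deriv_eq]
  simpa [Function.comp_def] using (hsecond.hasFDerivAt.comp_hasDerivAt (0 : ℝ) (hline 0)).deriv

lemma fderiv_fderiv_apply_nonpos_of_isLocalMax (hf : ContDiffAt ℝ 2 f x) (hmax : IsLocalMax f x)
    (e : E) : fderiv ℝ (fun y => fderiv ℝ f y e) x e ≤ 0 := by
  have hline : ContinuousAt (fun t : ℝ => x + t • e) 0 := by fun_prop
  have hx : x + (0 : ℝ) • e = x := by simp
  rw [← deriv_deriv_comp_add_smul hf e]
  refine deriv_deriv_nonpos_of_isLocalMax ?_ ?_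
  · exact ContinuousAt.comp' (by simpa using hf.continuousAt) hline
  · filter_upwards [hline.eventually (hx.symm ▸ hmax)] with t ht
    simpa using ht

lemma fderiv_fderiv_comp_apply_s6 {φ : ℝ → ℝ} (hφ : ContDiffAt ℝ 2 φ (f x))
    (hf : ContDiffAt ℝ 2 f x) (e : E) :
    fderiv ℝ (fun y => fderiv ℝ (fun z => φ (f z)) y e) x e =
      deriv (deriv φ) (f x) * fderiv ℝ f x e ^ 2 +
        deriv φ (f x) * fderiv ℝ (fun y => fderiv ℝ f y e) x e := by
  have hfirst : (fun y => fderiv ℝ (fun z => φ (f z)) y e) =ᶠ[𝓝 x]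
      fun y => deriv φ (f y) * fderiv ℝ f y e := by
    filter_upwards [hf.continuousAt.eventually (eventually_differentiableAt hφ),
      eventually_differentiableAt hf] with y hφy hfy
    have := (hφy.hasDerivAt.comp_hasFDerivAt y hfy.hasFDerivAt).fderiv
    simpa [Function.comp_def] using congr($this e)
  have hdφ : DifferentiableAt ℝ (deriv φ) (f x) :=
    (contDiffAt_fderiv_apply hφ 1).differentiableAt one_ne_zero
  have hfx : HasFDerivAt f (fderiv ℝ f x) x :=
    (hf.differentiableAt two_ne_zero).hasFDerivAt
  have hdf : DifferentiableAt ℝ (fun y => fderiv ℝ f y e) x :=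
    (contDiffAt_fderiv_apply hf e).differentiableAt one_ne_zero
  have := ((hdφ.hasDerivAt.comp_hasFDerivAt x hfx).mul hdf.hasFDerivAt).fderiv
  rw [hfirst.fderiv_eq]
  refine (congr($this e)).trans ?_
  simp only [Function.comp_apply, add_apply, smul_apply, smul_eq_mul]
  ring

end DirectionalDerivatives

section Laplacian

variable {N : ℕ} {f g : EuclideanSpace ℝ (Fin N) → ℝ} {x : EuclideanSpace ℝ (Fin N)}

lemma norm_gradient_sq_eq_sum (f : EuclideanSpace ℝ (Fin N) → ℝ) (x : EuclideanSpace ℝ (Fin N)) :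
    ‖gradient f x‖ ^ 2 = ∑ i, fderiv ℝ f x (EuclideanSpace.single i 1) ^ 2 := by
  simp [← (EuclideanSpace.basisFun (Fin N) ℝ).sum_sq_inner_left, inner_gradient_left]

lemma lap_congr (h : f =ᶠ[𝓝 x] g) : lap f x = lap g x := by
  refine Finset.sum_congr rfl fun i _ => ?_
  have hfirst : (fun y => fderiv ℝ f y (EuclideanSpace.single i 1)) =ᶠ[𝓝 x]
      fun y => fderiv ℝ g y (EuclideanSpace.single i 1) := by
    filter_upwards [h.fderiv (𝕜 := ℝ)] with y hy using by rw [hy]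
  rw [hfirst.fderiv_eq]

lemma lap_nonpos_of_isLocalMax (hf : ContDiffAt ℝ 2 f x) (hmax : IsLocalMax f x) :
    lap f x ≤ 0 :=
  Finset.sum_nonpos fun _ _ => fderiv_fderiv_apply_nonpos_of_isLocalMax hf hmax _

lemma lap_comp {φ : ℝ → ℝ} (hφ : ContDiffAt ℝ 2 φ (f x)) (hf : ContDiffAt ℝ 2 f x) :
    lap (fun y => φ (f y)) x =
      deriv (deriv φ) (f x) * ‖gradient f x‖ ^ 2 + deriv φ (f x) * lap f x := by
  simp only [lap, fderiv_fderiv_comp_apply_s6 hφ hf, Finset.sum_add_distrib, ← Finset.mul_sum,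
    norm_gradient_sq_eq_sum]

lemma lap_sub (hf : ContDiffAt ℝ 2 f x) (hg : ContDiffAt ℝ 2 g x) :
    lap (fun y => f y - g y) x = lap f x - lap g x := by
  rw [lap, lap, lap, ← Finset.sum_sub_distrib]
  refine Finset.sum_congr rfl fun i _ => ?_
  set e : EuclideanSpace ℝ (Fin N) := EuclideanSpace.single i 1
  have hfirst : (fun y => fderiv ℝ (fun z => f z - g z) y e) =ᶠ[𝓝 x]
      fun y => fderiv ℝ f y e - fderiv ℝ g y e := by
    filter_upwards [eventually_differentiableAt hf, eventually_differentiableAt hg] with y hfy hgy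
    rw [fderiv_fun_sub hfy hgy, sub_apply]
  rw [hfirst.fderiv_eq, fderiv_fun_sub
    ((contDiffAt_fderiv_apply hf e).differentiableAt one_ne_zero)
    ((contDiffAt_fderiv_apply hg e).differentiableAt one_ne_zero), sub_apply]

lemma lap_const_mul (c : ℝ) (hf : ContDiffAt ℝ 2 f x) :
    lap (fun y => c * f y) x = c * lap f x := by
  simpa using lap_comp (φ := fun t => c * t) (by fun_prop) hf

lemma mul_lap_le_lap_rpow {s : ℝ} (hs : 1 ≤ s) (hf : ContDiffAt ℝ 2 f x) (hpos : 0 < f x) :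
    s * f x ^ (s - 1) * lap f x ≤ lap (fun y => f y ^ s) x := by
  rw [lap_comp (φ := fun t => t ^ s) (Real.contDiffAt_rpow_const_of_ne hpos.ne') hf,
    Real.deriv_rpow_const', deriv_const_mul_field, Real.deriv_rpow_const]
  exact le_add_of_nonneg_left <| mul_nonneg
    (mul_nonneg (by positivity) (mul_nonneg (sub_nonneg.2 hs) (by positivity))) (by positivity)

lemma lap_eq_zero_of_notMem_tsupport (hx : x ∉ tsupport f) : lap f x = 0 := by
  rw [lap_congr (notMem_tsupport_iff_eventuallyEq.1 hx)]
  simp [lap]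

end Laplacian

section MaximumPrinciple

variable {N : ℕ} {Ω : Set (EuclideanSpace ℝ (Fin N))} {w : EuclideanSpace ℝ (Fin N) → ℝ}

lemma nonpos_of_forall_pos_lap_pos (hΩ : IsOpen Ω) (hw : ContDiffOn ℝ 2 w Ω)
    (hlim : ∀ δ > 0, ∀ᶠ x : Ω in cocompact Ω, w x ≤ δ)
    (hlap : ∀ x ∈ Ω, 0 < w x → 0 < lap w x) : ∀ x ∈ Ω, w x ≤ 0 := by
  by_contra! ⟨x, hx, hpos⟩
  have hcont : Continuous fun y : Ω => w y := hw.continuousOn.domRestrict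
  obtain ⟨⟨z, hz⟩, hmax⟩ := hcont.exists_forall_ge' ⟨x, hx⟩ (hlim (w x) hpos)
  have hzmax : IsLocalMax w z :=
    mem_of_superset (hΩ.mem_nhds hz) fun y hy => hmax ⟨y, hy⟩
  exact (hlap z hz (hpos.trans_le (hmax ⟨x, hx⟩))).not_ge
    (lap_nonpos_of_isLocalMax (hw.contDiffAt (hΩ.mem_nhds hz)) hzmax)

lemma mul_rpow_mul_rpow_le_of_mul_le_rpow {p s d a b : ℝ} (hp : 1 ≤ p) (hd : 0 < d)
    (hds : d ^ p = s) (ha : 0 < a) (hb : 0 ≤ b) (hab : d * b ≤ a ^ s) :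
    s * a ^ (s - 1) * b ^ (p - 1) ≤ d * a ^ (s * p - 1) := by
  have hs : s = d * d ^ (p - 1) := by
    rw [← hds, mul_comm, ← Real.rpow_add_one hd.ne', sub_add_cancel]
  calc s * a ^ (s - 1) * b ^ (p - 1)
      = d * a ^ (s - 1) * (d * b) ^ (p - 1) := by
        rw [Real.mul_rpow hd.le hb]; nth_rw 1 [hs]; ring
    _ ≤ d * a ^ (s - 1) * (a ^ s) ^ (p - 1) := by gcongr
    _ = d * a ^ (s * p - 1) := by
        rw [← Real.rpow_mul ha.le, mul_assoc, ← Real.rpow_add ha]; ring_nf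

lemma rpow_sub_mul_le_lap {p s d : ℝ} {u v : EuclideanSpace ℝ (Fin N) → ℝ}
    {x : EuclideanSpace ℝ (Fin N)} (hp : 1 ≤ p) (hs : 1 ≤ s) (hd : 0 < d) (hds : d ^ p = s)
    (hu2 : ContDiffAt ℝ 2 u x) (hv2 : ContDiffAt ℝ 2 v x) (hu : 0 < u x) (hv : 0 ≤ v x)
    (hequ : -lap u x + u x ≤ v x ^ (p - 1)) (heqv : u x ^ (s * p - 1) ≤ -lap v x + v x)
    (hvu : d * v x ≤ u x ^ s) :
    u x ^ s - d * v x ≤ lap (fun y => u y ^ s - d * v y) x := by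
  have hpow : u x ^ s = u x ^ (s - 1) * u x := by
    rw [← Real.rpow_add_one hu.ne', sub_add_cancel]
  have hcoupling := mul_rpow_mul_rpow_le_of_mul_le_rpow hp hd hds hu hv hvu
  rw [lap_sub (hu2.rpow_const_of_ne hu.ne') (contDiffAt_const.mul hv2), lap_const_mul d hv2]
  calc u x ^ s - d * v x
      ≤ s * u x ^ s - d * v x := by
        gcongr
        exact le_mul_of_one_le_left (by positivity) hs
    _ ≤ s * u x ^ (s - 1) * (u x - v x ^ (p - 1)) - d * (v x - u x ^ (s * p - 1)) := by
        rw [hpow]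
        linarith
    _ ≤ s * u x ^ (s - 1) * lap u x - d * lap v x := by
        gcongr
        · linarith
        · linarith
    _ ≤ lap (fun y => u y ^ s) x - d * lap v x := by
        gcongr
        exact mul_lap_le_lap_rpow hs hu2 hu

lemma rpow_le_div_mul_rpow {p q : ℝ} {u v : EuclideanSpace ℝ (Fin N) → ℝ}
    (hp : 1 ≤ p) (hpq : p ≤ q) (hΩ : IsOpen Ω)
    (hu2 : ContDiffOn ℝ 2 u Ω) (hv2 : ContDiffOn ℝ 2 v Ω)
    (hu : ∀ x ∈ Ω, 0 < u x) (hv : ∀ x ∈ Ω, 0 ≤ v x)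
    (hu0 : Tendsto (fun x : Ω => u x) (cocompact Ω) (𝓝 0))
    (hequ : ∀ x ∈ Ω, -lap u x + u x ≤ v x ^ (p - 1))
    (heqv : ∀ x ∈ Ω, u x ^ (q - 1) ≤ -lap v x + v x) :
    ∀ x ∈ Ω, u x ^ q ≤ q / p * v x ^ p := by
  have hp0 : 0 < p := by linarith
  obtain ⟨s, hs, rfl⟩ : ∃ s, 1 ≤ s ∧ q = s * p :=
    ⟨q / p, (one_le_div hp0).2 hpq, (div_mul_cancel₀ q hp0.ne').symm⟩
  have hs0 : 0 < s := by linarith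
  obtain ⟨d, hd, hds⟩ : ∃ d, 0 < d ∧ d ^ p = s :=
    ⟨s ^ p⁻¹, Real.rpow_pos_of_pos hs0 _, Real.rpow_inv_rpow hs0.le hp0.ne'⟩
  have hus0 : Tendsto (fun x : Ω => u x ^ s) (cocompact Ω) (𝓝 0) := by
    simpa [Real.zero_rpow hs0.ne'] using hu0.rpow_const (p := s) (Or.inr hs0.le)
  have hcomparison : ∀ x ∈ Ω, u x ^ s - d * v x ≤ 0 := by
    refine nonpos_of_forall_pos_lap_pos hΩ
      ((hu2.rpow_const_of_ne fun x hx => (hu x hx).ne').sub (contDiffOn_const.mul hv2))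
      (fun δ hδ => ?_) fun x hx hpos => hpos.trans_le ?_
    · filter_upwards [hus0.eventually_le_const hδ] with x hxδ
      linarith [mul_nonneg hd.le (hv x x.2)]
    · have hxΩ := hΩ.mem_nhds hx
      exact rpow_sub_mul_le_lap hp hs hd hds (hu2.contDiffAt hxΩ) (hv2.contDiffAt hxΩ) (hu x hx)
        (hv x hx) (hequ x hx) (heqv x hx) (by linarith)
  intro x hx
  have hux := hu x hx
  rw [mul_div_cancel_right₀ s hp0.ne']
  calc u x ^ (s * p) = (u x ^ s) ^ p := Real.rpow_mul hux.le s p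
    _ ≤ (d * v x) ^ p := by
      gcongr
      linarith [hcomparison x hx]
    _ = s * v x ^ p := by rw [Real.mul_rpow hd.le (hv x hx), hds]

end MaximumPrinciple

section Truncation

/-- A smooth truncation of `t ↦ t ^ 2 / 2` that vanishes for `t ≤ k⁻¹`: its derivative is `t` times
a smooth cutoff equal to `0` for `k * t ≤ 1` and to `1` for `2 ≤ k * t`. Composing it with a
solution gives a compactly supported function. -/
noncomputable def truncatedHalfSq (k t : ℝ) : ℝ :=
  ∫ τ in (0 : ℝ)..t, τ * Real.smoothTransition (k * τ - 1)

variable {k t : ℝ}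

lemma continuous_mul_smoothTransition (k : ℝ) :
    Continuous fun t => t * Real.smoothTransition (k * t - 1) := by
  have := Real.smoothTransition.continuous
  fun_prop

lemma deriv_truncatedHalfSq (k : ℝ) :
    deriv (truncatedHalfSq k) = fun t => t * Real.smoothTransition (k * t - 1) :=
  funext fun _ => (continuous_mul_smoothTransition k).deriv_integral _ _ _

lemma contDiff_truncatedHalfSq (k : ℝ) : ContDiff ℝ 2 (truncatedHalfSq k) := by
  rw [show (2 : WithTop ℕ∞) = 1 + 1 by norm_num, contDiff_succ_iff_deriv]
  refine ⟨fun t => ((continuous_mul_smoothTransition k).integral_hasStrictDerivAt 0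
    t).hasDerivAt.differentiableAt, by simp, ?_⟩
  rw [deriv_truncatedHalfSq]
  exact contDiff_id.mul (Real.smoothTransition.contDiff.comp (by fun_prop))

lemma mul_smoothTransition_eq_zero (hk : 0 < k) (ht : t ≤ k⁻¹) :
    t * Real.smoothTransition (k * t - 1) = 0 := by
  have : k * t ≤ 1 := (mul_le_mul_of_nonneg_left ht hk.le).trans_eq (mul_inv_cancel₀ hk.ne')
  rw [Real.smoothTransition.zero_of_nonpos (by linarith), mul_zero]

lemma truncatedHalfSq_eq_zero (hk : 0 < k) (ht : t ≤ k⁻¹) : truncatedHalfSq k t = 0 :=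
  intervalIntegral.integral_zero_ae <| ae_of_all _ fun _ hτ =>
    mul_smoothTransition_eq_zero hk <| (mem_uIoc.1 hτ).elim (fun h => h.2.trans ht)
      fun h => h.2.trans (inv_nonneg.2 hk.le)

lemma deriv_truncatedHalfSq_eq_zero (hk : 0 < k) (ht : t ≤ k⁻¹) :
    deriv (truncatedHalfSq k) t = 0 := by
  simp only [deriv_truncatedHalfSq, mul_smoothTransition_eq_zero hk ht]

lemma deriv_truncatedHalfSq_nonneg (ht : 0 ≤ t) : 0 ≤ deriv (truncatedHalfSq k) t := by
  rw [deriv_truncatedHalfSq]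
  exact mul_nonneg ht (Real.smoothTransition.nonneg _)

lemma deriv_truncatedHalfSq_le (ht : 0 ≤ t) : deriv (truncatedHalfSq k) t ≤ t := by
  rw [deriv_truncatedHalfSq]
  exact mul_le_of_le_one_right ht (Real.smoothTransition.le_one _)

lemma smoothTransition_le_deriv_deriv_truncatedHalfSq (hk : 0 ≤ k) (ht : 0 ≤ t) :
    Real.smoothTransition (k * t - 1) ≤ deriv (deriv (truncatedHalfSq k)) t := by
  have hmono : Monotone fun τ => Real.smoothTransition (k * τ - 1) :=
    Real.smoothTransition.monotone.comp fun a b hab => by gcongr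
  have hdiff : Differentiable ℝ fun τ => Real.smoothTransition (k * τ - 1) :=
    ((Real.smoothTransition.contDiff (n := 1)).comp (by fun_prop)).differentiable one_ne_zero
  have hderiv : HasDerivAt (fun τ => τ * Real.smoothTransition (k * τ - 1)) _ t :=
    (hasDerivAt_id t).mul (hdiff t).hasDerivAt
  rw [deriv_truncatedHalfSq, hderiv.deriv, one_mul]
  exact le_add_of_nonneg_right (mul_nonneg ht hmono.deriv_nonneg)

end Truncation

section CompactlySupported

section Extension

variable {E : Type*} [NormedAddCommGroup E] {Ω K : Set E} {f : E → ℝ}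

lemma tsupport_indicator_subset (hK : IsClosed K) (hf : ∀ x ∈ Ω \ K, f x = 0) :
    tsupport (Ω.indicator f) ⊆ K := by
  refine closure_minimal (fun x hx => ?_) hK
  by_contra hxK
  exact hx (by_cases (fun hxΩ : x ∈ Ω => by simp [hf x ⟨hxΩ, hxK⟩]) fun hxΩ => by simp [hxΩ])

lemma contDiff_indicator [NormedSpace ℝ E] {n : WithTop ℕ∞} (hΩ : IsOpen Ω)
    (hsupp : tsupport (Ω.indicator f) ⊆ Ω) (hf : ContDiffOn ℝ n f Ω) :
    ContDiff ℝ n (Ω.indicator f) := by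
  refine contDiff_iff_contDiffAt.2 fun x => ?_
  by_cases hx : x ∈ tsupport (Ω.indicator f)
  · have hxΩ := hΩ.mem_nhds (hsupp hx)
    exact (hf.contDiffAt hxΩ).congr_of_eventuallyEq (eqOn_indicator.eventuallyEq_of_mem hxΩ)
  · exact contDiffAt_const.congr_of_eventuallyEq (notMem_tsupport_iff_eventuallyEq.1 hx)

lemma integrableOn_of_continuousOn_of_isCompact [MeasurableSpace E] [BorelSpace E]
    {μ : Measure E} [IsFiniteMeasureOnCompacts μ] (hΩ : IsOpen Ω) (hK : IsCompact K)
    (hKΩ : K ⊆ Ω) (hcont : ContinuousOn f Ω) (hf : ∀ x ∈ Ω \ K, f x = 0) : IntegrableOn f Ω μ :=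
  ((hcont.mono hKΩ).integrableOn_compact hK).of_forall_sdiff_eq_zero hΩ.measurableSet hf

end Extension

section Derivative

variable {E : Type*} [NormedAddCommGroup E] [NormedSpace ℝ E] [MeasurableSpace E] [BorelSpace E]
  {μ : Measure E} {f : E → ℝ}

lemma integrable_fderiv_apply [IsFiniteMeasureOnCompacts μ] (hf : ContDiff ℝ 1 f)
    (hsupp : HasCompactSupport f) (e : E) : Integrable (fun x => fderiv ℝ f x e) μ :=
  ((hf.continuous_fderiv one_ne_zero).clm_apply continuous_const).integrable_of_hasCompactSupport
    (hsupp.fderiv_apply ℝ e)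

lemma integral_fderiv_apply_eq_zero [FiniteDimensional ℝ E] [μ.IsAddHaarMeasure]
    (hf : ContDiff ℝ 1 f) (hsupp : HasCompactSupport f) (e : E) :
    ∫ x, fderiv ℝ f x e ∂μ = 0 := by
  simpa using integral_mul_fderiv_eq_neg_fderiv_mul_of_integrable (μ := μ)
    (f := fun _ => (1 : ℝ)) (g := f) (v := e) (by simp)
    (by simpa using integrable_fderiv_apply hf hsupp e)
    (by simpa using hf.continuous.integrable_of_hasCompactSupport hsupp)
    (fun x _ => by fun_prop) (fun x _ => hf.differentiable one_ne_zero x)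

end Derivative

lemma integral_lap_eq_zero {N : ℕ} {f : EuclideanSpace ℝ (Fin N) → ℝ} (hf : ContDiff ℝ 2 f)
    (hsupp : HasCompactSupport f) : ∫ x, lap f x = 0 := by
  have hpartial (i : Fin N) := contDiff_fderiv_apply hf (EuclideanSpace.single i 1)
  have hpartial_supp (i : Fin N) := hsupp.fderiv_apply ℝ (EuclideanSpace.single i 1)
  simp only [lap]
  rw [integral_finsetSum _ fun i _ => integrable_fderiv_apply (hpartial i) (hpartial_supp i) _]
  exact Finset.sum_eq_zero fun i _ => integral_fderiv_apply_eq_zero (hpartial i) (hpartial_supp i) _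

end CompactlySupported

section Energy

lemma exists_isCompact_forall_sdiff_of_eventually_cocompact {X : Type*} [TopologicalSpace X]
    {Ω : Set X} {P : X → Prop} (h : ∀ᶠ x : Ω in cocompact Ω, P x) :
    ∃ K ⊆ Ω, IsCompact K ∧ ∀ x ∈ Ω \ K, P x := by
  obtain ⟨T, hT, hP⟩ := mem_cocompact.1 h
  refine ⟨Subtype.val '' T, Subtype.coe_image_subset Ω T, hT.image continuous_subtype_val, ?_⟩
  rintro x ⟨hxΩ, hxT⟩
  exact hP fun hx : (⟨x, hxΩ⟩ : Ω) ∈ T => hxT ⟨_, hx, rfl⟩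

variable {N : ℕ} {Ω K : Set (EuclideanSpace ℝ (Fin N))} {f v : EuclideanSpace ℝ (Fin N) → ℝ}

lemma continuousOn_lap (hΩ : IsOpen Ω) (hf : ContDiffOn ℝ 2 f Ω) : ContinuousOn (lap f) Ω :=
  continuousOn_finsetSum _ fun _ _ =>
    (((hf.fderiv_of_isOpen (m := 1) hΩ (by norm_num)).clm_apply
      contDiffOn_const).continuousOn_fderiv_of_isOpen hΩ le_rfl).clm_apply continuousOn_const

lemma continuousOn_norm_gradient_sq (hΩ : IsOpen Ω) (hf : ContDiffOn ℝ 1 f Ω) :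
    ContinuousOn (fun x => ‖gradient f x‖ ^ 2) Ω := by
  simp only [norm_gradient_sq_eq_sum]
  exact continuousOn_finsetSum _ fun _ _ =>
    ((hf.continuousOn_fderiv_of_isOpen hΩ le_rfl).clm_apply continuousOn_const).pow 2

lemma integrableOn_lap (hΩ : IsOpen Ω) (hK : IsCompact K) (hKΩ : K ⊆ Ω)
    (hf : ContDiffOn ℝ 2 f Ω) (hzero : ∀ x ∈ Ω \ K, f x = 0) : IntegrableOn (lap f) Ω := by
  refine integrableOn_of_continuousOn_of_isCompact hΩ hK hKΩ (continuousOn_lap hΩ hf) fun x hx => ?_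
  have hcongr : f =ᶠ[𝓝 x] 0 :=
    mem_of_superset ((hΩ.sdiff hK.isClosed).mem_nhds hx) hzero
  exact lap_eq_zero_of_notMem_tsupport (notMem_tsupport_iff_eventuallyEq.2 hcongr)

lemma setIntegral_lap_eq_zero (hΩ : IsOpen Ω) (hK : IsCompact K) (hKΩ : K ⊆ Ω)
    (hf : ContDiffOn ℝ 2 f Ω) (hzero : ∀ x ∈ Ω \ K, f x = 0) : ∫ x in Ω, lap f x = 0 := by
  have hsupp : tsupport (Ω.indicator f) ⊆ K := tsupport_indicator_subset hK.isClosed hzero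
  calc ∫ x in Ω, lap f x = ∫ x in Ω, lap (Ω.indicator f) x :=
        setIntegral_congr_fun hΩ.measurableSet fun x hx =>
          lap_congr (eqOn_indicator.symm.eventuallyEq_of_mem (hΩ.mem_nhds hx))
    _ = ∫ x, lap (Ω.indicator f) x :=
        setIntegral_eq_integral_of_forall_compl_eq_zero fun x hx =>
          lap_eq_zero_of_notMem_tsupport fun hxs => hx (hKΩ (hsupp hxs))
    _ = 0 := integral_lap_eq_zero (contDiff_indicator hΩ (hsupp.trans hKΩ) hf)
        (hK.of_isClosed_subset (isClosed_tsupport _) hsupp)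

lemma setLIntegral_ofReal_add_lap {g : EuclideanSpace ℝ (Fin N) → ℝ} (hΩ : IsOpen Ω)
    (hK : IsCompact K) (hKΩ : K ⊆ Ω) (hf : ContDiffOn ℝ 2 f Ω) (hzero : ∀ x ∈ Ω \ K, f x = 0)
    (hg : IntegrableOn g Ω) (hg0 : ∀ x ∈ Ω, 0 ≤ g x) (hgf0 : ∀ x ∈ Ω, 0 ≤ g x + lap f x) :
    ∫⁻ x in Ω, ENNReal.ofReal (g x + lap f x) = ∫⁻ x in Ω, ENNReal.ofReal (g x) := by
  have hlap := integrableOn_lap hΩ hK hKΩ hf hzero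
  rw [← ofReal_integral_eq_lintegral_ofReal (f := fun x => g x + lap f x) (hg.add hlap)
      (ae_restrict_of_forall_mem hΩ.measurableSet hgf0),
    ← ofReal_integral_eq_lintegral_ofReal hg (ae_restrict_of_forall_mem hΩ.measurableSet hg0),
    integral_add hg hlap, setIntegral_lap_eq_zero hΩ hK hKΩ hf hzero, add_zero]

lemma smoothTransition_mul_energy_le {k : ℝ} {x : EuclideanSpace ℝ (Fin N)} (hk : 0 ≤ k)
    (hv2 : ContDiffAt ℝ 2 v x) (hv : 0 ≤ v x) :
    Real.smoothTransition (k * v x - 1) * (‖gradient v x‖ ^ 2 + v x ^ 2) ≤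
      deriv (truncatedHalfSq k) (v x) * (-lap v x + v x) +
        lap (fun y => truncatedHalfSq k (v y)) x := by
  have hgradient := mul_le_mul_of_nonneg_right
    (smoothTransition_le_deriv_deriv_truncatedHalfSq hk hv) (sq_nonneg ‖gradient v x‖)
  rw [lap_comp (contDiff_truncatedHalfSq k).contDiffAt hv2]
  simp only [deriv_truncatedHalfSq] at hgradient ⊢
  linarith

lemma lintegral_smoothTransition_mul_energy_le {k : ℝ} (hk : 0 < k) (hΩ : IsOpen Ω)
    (hv2 : ContDiffOn ℝ 2 v Ω) (hv : ∀ x ∈ Ω, 0 ≤ v x)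
    (hv0 : Tendsto (fun x : Ω => v x) (cocompact Ω) (𝓝 0)) (hlap : ∀ x ∈ Ω, 0 ≤ -lap v x + v x) :
    ∫⁻ x in Ω, ENNReal.ofReal
        (Real.smoothTransition (k * v x - 1) * (‖gradient v x‖ ^ 2 + v x ^ 2)) ≤
      ∫⁻ x in Ω, ENNReal.ofReal ((-lap v x + v x) * v x) := by
  obtain ⟨K, hKΩ, hK, hvK⟩ := exists_isCompact_forall_sdiff_of_eventually_cocompact
    (P := fun x => v x ≤ k⁻¹) (hv0.eventually_le_const (inv_pos.2 hk))
  set φ := truncatedHalfSq k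
  have hφ : ContDiff ℝ 2 φ := contDiff_truncatedHalfSq k
  have htested : IntegrableOn (fun x => deriv φ (v x) * (-lap v x + v x)) Ω := by
    refine integrableOn_of_continuousOn_of_isCompact hΩ hK hKΩ ?_ fun x hx => ?_
    · exact ((hφ.continuous_deriv (by norm_num)).comp_continuousOn hv2.continuousOn).mul
        ((continuousOn_lap hΩ hv2).neg.add hv2.continuousOn)
    · rw [deriv_truncatedHalfSq_eq_zero hk (hvK x hx), zero_mul]
  have henergy (x) (hx : x ∈ Ω) :=
    smoothTransition_mul_energy_le hk.le (hv2.contDiffAt (hΩ.mem_nhds hx)) (hv x hx)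
  calc ∫⁻ x in Ω, ENNReal.ofReal
        (Real.smoothTransition (k * v x - 1) * (‖gradient v x‖ ^ 2 + v x ^ 2))
      ≤ ∫⁻ x in Ω, ENNReal.ofReal
          (deriv φ (v x) * (-lap v x + v x) + lap (fun y => φ (v y)) x) :=
        setLIntegral_mono' hΩ.measurableSet fun x hx => ENNReal.ofReal_le_ofReal (henergy x hx)
    _ = ∫⁻ x in Ω, ENNReal.ofReal (deriv φ (v x) * (-lap v x + v x)) :=
        setLIntegral_ofReal_add_lap hΩ hK hKΩ (hφ.comp_contDiffOn hv2)
          (fun x hx => truncatedHalfSq_eq_zero hk (hvK x hx)) htested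
          (fun x hx => mul_nonneg (deriv_truncatedHalfSq_nonneg (hv x hx)) (hlap x hx))
          fun x hx => (mul_nonneg (Real.smoothTransition.nonneg _) (by positivity)).trans
            (henergy x hx)
    _ ≤ ∫⁻ x in Ω, ENNReal.ofReal ((-lap v x + v x) * v x) :=
        setLIntegral_mono' hΩ.measurableSet fun x hx => ENNReal.ofReal_le_ofReal <| by
          rw [mul_comm]
          exact mul_le_mul_of_nonneg_left (deriv_truncatedHalfSq_le (hv x hx)) (hlap x hx)

lemma lintegral_energy_le (hΩ : IsOpen Ω) (hv2 : ContDiffOn ℝ 2 v Ω) (hv : ∀ x ∈ Ω, 0 < v x)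
    (hv0 : Tendsto (fun x : Ω => v x) (cocompact Ω) (𝓝 0)) (hlap : ∀ x ∈ Ω, 0 ≤ -lap v x + v x) :
    ∫⁻ x in Ω, ENNReal.ofReal (‖gradient v x‖ ^ 2 + v x ^ 2) ≤
      ∫⁻ x in Ω, ENNReal.ofReal ((-lap v x + v x) * v x) := by
  set F : ℕ → EuclideanSpace ℝ (Fin N) → ℝ≥0∞ := fun n x => ENNReal.ofReal
    (Real.smoothTransition (n * v x - 1) * (‖gradient v x‖ ^ 2 + v x ^ 2))
  have hmeas (n : ℕ) : AEMeasurable (F n) (volume.restrict Ω) := by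
    have hcutoff : ContinuousOn (fun x => Real.smoothTransition (n * v x - 1)) Ω :=
      Real.smoothTransition.continuous.comp_continuousOn
        ((continuousOn_const.mul hv2.continuousOn).sub continuousOn_const)
    exact ((hcutoff.mul ((continuousOn_norm_gradient_sq hΩ (hv2.of_le one_le_two)).add
      (hv2.continuousOn.pow 2))).aemeasurable hΩ.measurableSet).ennreal_ofReal
  have hlim (x) (hx : x ∈ Ω) : Tendsto (fun n => F n x) atTop
      (𝓝 (ENNReal.ofReal (‖gradient v x‖ ^ 2 + v x ^ 2))) := by
    refine tendsto_const_nhds.congr' ?_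
    filter_upwards [(tendsto_natCast_atTop_atTop.atTop_mul_const (hv x hx)).eventually_ge_atTop 2]
      with n hn
    simp only [F, Real.smoothTransition.one_of_one_le (show 1 ≤ n * v x - 1 by linarith), one_mul]
  calc ∫⁻ x in Ω, ENNReal.ofReal (‖gradient v x‖ ^ 2 + v x ^ 2)
      = ∫⁻ x in Ω, liminf (fun n => F n x) atTop :=
        setLIntegral_congr_fun hΩ.measurableSet fun x hx => (hlim x hx).liminf_eq.symm
    _ ≤ liminf (fun n => ∫⁻ x in Ω, F n x) atTop := lintegral_liminf_le' hmeas
    _ ≤ ∫⁻ x in Ω, ENNReal.ofReal ((-lap v x + v x) * v x) := by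
        refine liminf_le_of_frequently_le' (Eventually.frequently ?_)
        filter_upwards [eventually_gt_atTop 0] with n hn
        exact lintegral_smoothTransition_mul_energy_le (Nat.cast_pos.2 hn) hΩ hv2
          (fun x hx => (hv x hx).le) hv0 hlap

end Energy

section BoundaryValues

lemma tendsto_cocompact_of_eq_on_frontier {X Y : Type*} [TopologicalSpace X]
    [PseudoMetricSpace Y] {Ω : Set X} {f : X → Y} {a : Y} (hΩ : IsOpen Ω)
    (hf : ContinuousOn f (closure Ω)) (hfa : ∀ x ∈ frontier Ω, f x = a)
    (hlim : Tendsto f (cocompact X ⊓ 𝓟 Ω) (𝓝 a)) :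
    Tendsto (fun x : Ω => f x) (cocompact Ω) (𝓝 a) := by
  refine Metric.tendsto_nhds.2 fun ε hε => ?_
  obtain ⟨C, hC, hCΩ⟩ := mem_cocompact.1
    (mem_inf_principal.1 (hlim.eventually (Metric.ball_mem_nhds a hε)))
  have hfε (x) (hx : x ∈ Ω) (hxC : x ∉ C) : dist (f x) a < ε := hCΩ hxC hx
  set T := closure Ω ∩ f ⁻¹' {y | ε ≤ dist y a}
  have hTΩ : T ⊆ Ω := by
    rintro x ⟨hx, hxε : ε ≤ dist (f x) a⟩
    by_contra hxΩ
    have hfx : f x = a := hfa x (hΩ.frontier_eq ▸ ⟨hx, hxΩ⟩)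
    exact hxε.not_gt (by simpa [hfx] using hε)
  have hTC : T ⊆ C := fun x hx => by_contra fun hxC => hx.2.not_gt (hfε x (hTΩ hx) hxC)
  have hT : IsCompact T := hC.of_isClosed_subset
    (hf.preimage_isClosed_of_isClosed isClosed_closure
      (isClosed_le continuous_const (by fun_prop))) hTC
  have hpreimage : IsCompact ((↑) ⁻¹' T : Set Ω) :=
    Topology.IsInducing.subtypeVal.isCompact_preimage' hT (by simpa using hTΩ)
  filter_upwards [hpreimage.compl_mem_cocompact] with x hx
  exact not_le.1 fun hxε => hx ⟨subset_closure x.2, hxε⟩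

lemma tendsto_cocompact_of_norm_lt {E Y : Type*} [NormedAddCommGroup E] [ProperSpace E]
    [PseudoMetricSpace Y] {R : ℝ} {f : E → Y} {a : Y}
    (hf : ContinuousOn f (closure {x | R < ‖x‖})) (hfa : ∀ x, ‖x‖ = R → f x = a)
    (hlim : Tendsto f (comap norm atTop) (𝓝 a)) :
    Tendsto (fun x : {x : E | R < ‖x‖} => f x) (cocompact {x : E | R < ‖x‖}) (𝓝 a) := by
  refine tendsto_cocompact_of_eq_on_frontier (isOpen_lt continuous_const continuous_norm) hf
    (fun x hx => hfa x (frontier_lt_subset_eq continuous_const continuous_norm hx).symm) ?_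
  rw [comap_norm_atTop, Metric.cobounded_eq_cocompact] at hlim
  exact hlim.mono_left inf_le_left

end BoundaryValues

lemma rpow_sub_one_mul_le {p q a b : ℝ} (hp : 0 < p) (hq : 0 ≤ q) (ha : 0 < a) (hb : 0 < b)
    (hab : a ^ q ≤ q / p * b ^ p) :
    a ^ (q - 1) * b ≤ √(q / p) * (b ^ ((p + 2) / 2) * a ^ ((q - 2) / 2)) := by
  have hsqrt : a ^ (q / 2) ≤ √(q / p) * b ^ (p / 2) := by
    calc a ^ (q / 2) = √(a ^ q) := by
          rw [Real.sqrt_eq_rpow, ← Real.rpow_mul ha.le, mul_one_div]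
      _ ≤ √(q / p * b ^ p) := Real.sqrt_le_sqrt hab
      _ = √(q / p) * b ^ (p / 2) := by
          rw [Real.sqrt_mul (by positivity), Real.sqrt_eq_rpow (b ^ p), ← Real.rpow_mul hb.le,
            mul_one_div]
  calc a ^ (q - 1) * b = a ^ (q / 2) * (a ^ ((q - 2) / 2) * b) := by
        rw [← mul_assoc, ← Real.rpow_add ha]
        ring_nf
    _ ≤ √(q / p) * b ^ (p / 2) * (a ^ ((q - 2) / 2) * b) := by gcongr
    _ = √(q / p) * (b ^ ((p + 2) / 2) * a ^ ((q - 2) / 2)) := by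
        rw [show (p + 2) / 2 = p / 2 + 1 by ring, Real.rpow_add_one hb.ne']
        ring

/-- Convergence to `0` along `cocompact Ω` encodes vanishing both on the boundary of `Ω` and, when
`Ω` is unbounded, at infinity. -/
theorem stmt_6_general {N : ℕ} {p q : ℝ} (hp : 1 ≤ p) (hpq : p ≤ q)
    {Ω : Set (EuclideanSpace ℝ (Fin N))} (hΩ : IsOpen Ω) {u v : EuclideanSpace ℝ (Fin N) → ℝ}
    (hu2 : ContDiffOn ℝ 2 u Ω) (hv2 : ContDiffOn ℝ 2 v Ω)
    (hu : ∀ x ∈ Ω, 0 < u x) (hv : ∀ x ∈ Ω, 0 < v x)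
    (hu0 : Tendsto (fun x : Ω => u x) (cocompact Ω) (𝓝 0))
    (hv0 : Tendsto (fun x : Ω => v x) (cocompact Ω) (𝓝 0))
    (hequ : ∀ x ∈ Ω, -lap u x + u x ≤ v x ^ (p - 1))
    (heqv : ∀ x ∈ Ω, -lap v x + v x = u x ^ (q - 1)) :
    ∫⁻ x in Ω, ENNReal.ofReal (‖gradient v x‖ ^ 2 + v x ^ 2) ≤
      ENNReal.ofReal √(q / p) *
        ∫⁻ x in Ω, ENNReal.ofReal (v x ^ ((p + 2) / 2) * u x ^ ((q - 2) / 2)) := by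
  have hcomparison : ∀ x ∈ Ω, u x ^ q ≤ q / p * v x ^ p :=
    rpow_le_div_mul_rpow hp hpq hΩ hu2 hv2 hu (fun x hx => (hv x hx).le) hu0 hequ
      fun x hx => (heqv x hx).ge
  have hlap_nonneg (x) (hx : x ∈ Ω) : 0 ≤ -lap v x + v x :=
    (heqv x hx).symm ▸ Real.rpow_nonneg (hu x hx).le _
  calc ∫⁻ x in Ω, ENNReal.ofReal (‖gradient v x‖ ^ 2 + v x ^ 2)
      ≤ ∫⁻ x in Ω, ENNReal.ofReal ((-lap v x + v x) * v x) :=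
        lintegral_energy_le hΩ hv2 hv hv0 hlap_nonneg
    _ ≤ ∫⁻ x in Ω, ENNReal.ofReal √(q / p) *
          ENNReal.ofReal (v x ^ ((p + 2) / 2) * u x ^ ((q - 2) / 2)) :=
        setLIntegral_mono' hΩ.measurableSet fun x hx => by
          rw [← ENNReal.ofReal_mul (Real.sqrt_nonneg _), heqv x hx]
          exact ENNReal.ofReal_le_ofReal <| rpow_sub_one_mul_le (by linarith) (by linarith)
            (hu x hx) (hv x hx) (hcomparison x hx)
    _ = ENNReal.ofReal √(q / p) *
          ∫⁻ x in Ω, ENNReal.ofReal (v x ^ ((p + 2) / 2) * u x ^ ((q - 2) / 2)) :=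
        lintegral_const_mul' _ _ ENNReal.ofReal_ne_top

/-- for positive classical solutions of the system on the exterior domain
`A_R = {|x| > R}` with `v, |∇v| ∈ L²(A_R)` and `u^(q−1)·v ∈ L¹(A_R)`, one has
`∫_{A_R} (|∇v|² + v²) ≤ sqrt(q/p) · ∫_{A_R} v^((p+2)/2)·u^((q−2)/2)`, the right-hand
side being the (possibly infinite) Lebesgue integral of a nonnegative function. -/
theorem stmt_6 (N : ℕ) (hN : 2 ≤ N) (R : ℝ) (hR : 0 < R)
    (p q : ℝ) (hp : 2 ≤ p) (hpq : p ≤ q)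
    (AR : Set (EuclideanSpace ℝ (Fin N))) (hAR : AR = {x | R < ‖x‖})
    (u v : EuclideanSpace ℝ (Fin N) → ℝ)
    (hu2 : ContDiffOn ℝ 2 u AR) (hv2 : ContDiffOn ℝ 2 v AR)
    (huc : ContinuousOn u (closure AR)) (hvc : ContinuousOn v (closure AR))
    (hup : ∀ x ∈ AR, 0 < u x) (hvp : ∀ x ∈ AR, 0 < v x)
    (hub : ∀ x : EuclideanSpace ℝ (Fin N), ‖x‖ = R → u x = 0)
    (hvb : ∀ x : EuclideanSpace ℝ (Fin N), ‖x‖ = R → v x = 0)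
    (hulim : Tendsto u (comap (fun x : EuclideanSpace ℝ (Fin N) => ‖x‖) atTop) (nhds 0))
    (hvlim : Tendsto v (comap (fun x : EuclideanSpace ℝ (Fin N) => ‖x‖) atTop) (nhds 0))
    (heq1 : ∀ x ∈ AR, -lap u x + u x = v x ^ (p - 1))
    (heq2 : ∀ x ∈ AR, -lap v x + v x = u x ^ (q - 1))
    (hint1 : IntegrableOn (fun x => ‖gradient v x‖ ^ 2) AR)
    (hint2 : IntegrableOn (fun x => v x ^ 2) AR)
    (hint3 : IntegrableOn (fun x => u x ^ (q - 1) * v x) AR) :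
    ENNReal.ofReal (∫ x in AR, (‖gradient v x‖ ^ 2 + v x ^ 2)) ≤
      ENNReal.ofReal (Real.sqrt (q / p)) *
        ∫⁻ x in AR, ENNReal.ofReal (v x ^ ((p + 2) / 2) * u x ^ ((q - 2) / 2)) := by
  subst hAR
  have henergy : IntegrableOn (fun x => ‖gradient v x‖ ^ 2 + v x ^ 2) {x | R < ‖x‖} :=
    hint1.add hint2
  rw [ofReal_integral_eq_lintegral_ofReal henergy (ae_of_all _ fun x => by positivity)]
  exact stmt_6_general (by linarith) hpq (isOpen_lt continuous_const continuous_norm) hu2 hv2 hup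
    hvp (tendsto_cocompact_of_norm_lt huc hub hulim) (tendsto_cocompact_of_norm_lt hvc hvb hvlim)
    (fun x hx => (heq1 x hx).le) heq2
end

section
/- Let N ≥ 2 and let m, m' be integers with 1 ≤ m' < m ≤ N − 1. Suppose f : ℝ^N → ℝ satisfies: (i) f(x) = f(y) whenever sqrt(x₁² + ⋯ + x_m²) = sqrt(y₁² + ⋯ + y_m²) and sqrt(x_{m+1}² + ⋯ + x_N²) = sqrt(y_{m+1}² + ⋯ + y_N²); and (ii) f(x) = f(y) whenever sqrt(x₁² + ⋯ + x_{m'}²) = sqrt(y₁² + ⋯ + y_{m'}²) and sqrt(x_{m'+1}² + ⋯ + x_N²) = sqrt(y_{m'+1}² + ⋯ + y_N²). Then f is radial, i.e., f(x) = f(y) whenever |x| = |y|. Consequently, two solutions of the system which are invariant under the block decompositions ℝ^m × ℝ^n and ℝ^{m'} × ℝ^{n'} respectively (with n = N − m ≠ n' = N − m') can only coincide if they are both radial. -/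
/-- `sVar k x` is the Euclidean norm of the first `k` coordinates of `x ∈ ℝ^N`. -/
noncomputable def sVar {N : ℕ} (k : ℕ) (x : EuclideanSpace ℝ (Fin N)) : ℝ :=
  Real.sqrt (∑ i : Fin N, if (i : ℕ) < k then x i ^ 2 else 0)

/-- `tVar k x` is the Euclidean norm of the last `N - k` coordinates of `x ∈ ℝ^N`. -/
noncomputable def tVar {N : ℕ} (k : ℕ) (x : EuclideanSpace ℝ (Fin N)) : ℝ :=
  Real.sqrt (∑ i : Fin N, if (i : ℕ) < k then 0 else x i ^ 2)

/-!
A subspace that meets both `K` and `Kᗮ` nontrivially contains, for every `x`, a vector whose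
components along `K` and `Kᗮ` have the same norms as those of `x`. Hence a function of these two
norms is determined by its values on such a subspace. If it is moreover a function of the norms of
the components along `L` and `Lᗮ`, then on `Lᗮ` it depends on the norm alone, so it is radial as
soon as `Lᗮ` meets both `K` and `Kᗮ`. For `K` and `L` spanned by the first `m` and `m'`
coordinates, with `m' < m < N`, the subspace `Lᗮ` contains `e_{m'+1} ∈ K` and `e_{m+1} ∈ Kᗮ`.
-/

section InnerProductSpace

variable {𝕜 E α : Type*} [RCLike 𝕜] [NormedAddCommGroup E]

lemma exists_mem_norm_eq_of_ne_bot [NormedSpace 𝕜 E] {V : Submodule 𝕜 E} (hV : V ≠ ⊥) {c : ℝ}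
    (hc : 0 ≤ c) : ∃ v ∈ V, ‖v‖ = c := by
  obtain ⟨v, hv, hv0⟩ := V.exists_mem_ne_zero_of_ne_bot hV
  exact ⟨_, V.smul_mem _ hv, norm_smul_inv_norm' (𝕜 := 𝕜) hc hv0⟩

variable [InnerProductSpace 𝕜 E] {K L V : Submodule 𝕜 E}
  [K.HasOrthogonalProjection] [L.HasOrthogonalProjection]

lemma exists_mem_norm_starProjection_eq (hK : K ⊓ V ≠ ⊥) (hKperp : Kᗮ ⊓ V ≠ ⊥) (x : E) :
    ∃ v ∈ V, ‖K.starProjection v‖ = ‖K.starProjection x‖ ∧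
      ‖Kᗮ.starProjection v‖ = ‖Kᗮ.starProjection x‖ := by
  obtain ⟨a, ⟨haK, haV⟩, ha⟩ := exists_mem_norm_eq_of_ne_bot hK (norm_nonneg (K.starProjection x))
  obtain ⟨b, ⟨hbK, hbV⟩, hb⟩ :=
    exists_mem_norm_eq_of_ne_bot hKperp (norm_nonneg (Kᗮ.starProjection x))
  have hKab : K.starProjection (a + b) = a :=
    Submodule.eq_starProjection_of_mem_orthogonal' haK hbK rfl
  have hKperp_ab : Kᗮ.starProjection (a + b) = b := by
    rw [Submodule.starProjection_orthogonal_val, hKab, add_sub_cancel_left]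
  exact ⟨a + b, V.add_mem haV hbV, by rw [hKab, ha], by rw [hKperp_ab, hb]⟩

lemma norm_eq_norm_of_norm_starProjection_eq {x y : E}
    (hK : ‖K.starProjection x‖ = ‖K.starProjection y‖)
    (hKperp : ‖Kᗮ.starProjection x‖ = ‖Kᗮ.starProjection y‖) : ‖x‖ = ‖y‖ := by
  rw [← sq_eq_sq₀ (norm_nonneg x) (norm_nonneg y), K.norm_sq_eq_add_norm_sq_starProjection x,
    K.norm_sq_eq_add_norm_sq_starProjection y, hK, hKperp]

theorem stmt_7_general {f : E → α}
    (hfK : ∀ x y : E, ‖K.starProjection x‖ = ‖K.starProjection y‖ →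
      ‖Kᗮ.starProjection x‖ = ‖Kᗮ.starProjection y‖ → f x = f y)
    (hfL : ∀ x y : E, ‖L.starProjection x‖ = ‖L.starProjection y‖ →
      ‖Lᗮ.starProjection x‖ = ‖Lᗮ.starProjection y‖ → f x = f y)
    (hKL : K ⊓ Lᗮ ≠ ⊥) (hKperpL : Kᗮ ⊓ Lᗮ ≠ ⊥) {x y : E} (hxy : ‖x‖ = ‖y‖) : f x = f y := by
  obtain ⟨u, huL, huK, huKperp⟩ := exists_mem_norm_starProjection_eq hKL hKperpL x
  obtain ⟨v, hvL, hvK, hvKperp⟩ := exists_mem_norm_starProjection_eq hKL hKperpL y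
  have huv : ‖u‖ = ‖v‖ := by
    rw [norm_eq_norm_of_norm_starProjection_eq huK huKperp, hxy,
      norm_eq_norm_of_norm_starProjection_eq hvK hvKperp]
  have hfuv : f u = f v := by
    apply hfL
    · rw [L.starProjection_apply_eq_zero_iff.mpr huL, L.starProjection_apply_eq_zero_iff.mpr hvL]
    · rw [Submodule.starProjection_eq_self_iff.mpr huL,
        Submodule.starProjection_eq_self_iff.mpr hvL, huv]
  rw [← hfK u x huK huKperp, hfuv, hfK v y hvK hvKperp]

end InnerProductSpace

section Coordinates

/-- The coordinate subspace of `𝕜^ι` attached to a set `S` of indices: the vectors whose coordinates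
outside `S` vanish. -/
def coordSubspace (𝕜 : Type*) [RCLike 𝕜] {ι : Type*} (S : Set ι) :
    Submodule 𝕜 (EuclideanSpace 𝕜 ι) where
  carrier := {x | ∀ i ∉ S, x i = 0}
  add_mem' hx hy i hi := by simp [hx i hi, hy i hi]
  zero_mem' _ _ := rfl
  smul_mem' c x hx i hi := by simp [hx i hi]

variable {𝕜 ι : Type*} [RCLike 𝕜]

lemma mem_coordSubspace {S : Set ι} {x : EuclideanSpace 𝕜 ι} :
    x ∈ coordSubspace 𝕜 S ↔ ∀ i ∉ S, x i = 0 :=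
  Iff.rfl

lemma coordSubspace_inf_ne_bot {S T : Set ι} (hST : (S ∩ T).Nonempty) :
    coordSubspace 𝕜 S ⊓ coordSubspace 𝕜 T ≠ ⊥ := by
  classical
  obtain ⟨i, hiS, hiT⟩ := hST
  have single_mem {R : Set ι} (hi : i ∈ R) : EuclideanSpace.single i 1 ∈ coordSubspace 𝕜 R :=
    fun j hj ↦ by simp [(ne_of_mem_of_not_mem hi hj).symm]
  exact (Submodule.ne_bot_iff _).mpr ⟨_, ⟨single_mem hiS, single_mem hiT⟩, by simp⟩

variable [Fintype ι]

lemma starProjection_coordSubspace (S : Set ι) (x : EuclideanSpace 𝕜 ι) :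
    (coordSubspace 𝕜 S).starProjection x = WithLp.toLp 2 (S.indicator x) := by
  apply Submodule.eq_starProjection_of_mem_of_inner_eq_zero
  · exact fun i hi ↦ Set.indicator_of_notMem hi x
  · intro w hw
    rw [PiLp.inner_apply]
    refine Finset.sum_eq_zero fun i _ ↦ ?_
    by_cases hi : i ∈ S
    · simp [hi]
    · simp [hw i hi]

lemma orthogonal_coordSubspace (S : Set ι) : (coordSubspace 𝕜 S)ᗮ = coordSubspace 𝕜 Sᶜ := by
  ext x
  rw [← Submodule.starProjection_apply_eq_zero_iff, starProjection_coordSubspace,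
    WithLp.toLp_eq_zero, Set.indicator_eq_zero', Set.disjoint_left]
  simp only [mem_coordSubspace, Set.notMem_compl_iff, Function.mem_support, not_imp_not, ne_eq]

lemma norm_starProjection_coordSubspace (S : Set ι) [DecidablePred (· ∈ S)]
    (x : EuclideanSpace 𝕜 ι) :
    ‖(coordSubspace 𝕜 S).starProjection x‖ = √(∑ i, if i ∈ S then ‖x i‖ ^ 2 else 0) := by
  simp only [starProjection_coordSubspace, EuclideanSpace.norm_eq, Set.indicator_apply,
    apply_ite (‖·‖ ^ 2), norm_zero, zero_pow two_ne_zero]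

end Coordinates

section BlockNorms

variable {N : ℕ} (k : ℕ) (x : EuclideanSpace ℝ (Fin N))

lemma sVar_eq_norm_starProjection :
    sVar k x = ‖(coordSubspace ℝ {i : Fin N | (i : ℕ) < k}).starProjection x‖ := by
  simp [sVar, norm_starProjection_coordSubspace]

lemma tVar_eq_norm_starProjection_orthogonal :
    tVar k x = ‖(coordSubspace ℝ {i : Fin N | (i : ℕ) < k})ᗮ.starProjection x‖ := by
  simp only [tVar, orthogonal_coordSubspace, norm_starProjection_coordSubspace,
    Set.mem_compl_iff, Set.mem_ofPred_eq, ite_not, Real.norm_eq_abs, sq_abs]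

end BlockNorms

/-- if `f : ℝ^N → ℝ` is invariant under `O(m) × O(n)` (i.e. depends only on
the norms of the first `m` and last `n = N − m` coordinates) and under `O(m') × O(n')`
with `1 ≤ m' < m ≤ N − 1`, then `f` is radial. -/
theorem stmt_7 (N m m' : ℕ) (hN : 2 ≤ N) (hm'1 : 1 ≤ m') (hm'm : m' < m)
    (hmN : m ≤ N - 1)
    (f : EuclideanSpace ℝ (Fin N) → ℝ)
    (h1 : ∀ x y : EuclideanSpace ℝ (Fin N),
      sVar m x = sVar m y → tVar m x = tVar m y → f x = f y)
    (h2 : ∀ x y : EuclideanSpace ℝ (Fin N),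
      sVar m' x = sVar m' y → tVar m' x = tVar m' y → f x = f y) :
    ∀ x y : EuclideanSpace ℝ (Fin N), ‖x‖ = ‖y‖ → f x = f y := by
  simp only [sVar_eq_norm_starProjection, tVar_eq_norm_starProjection_orthogonal] at h1 h2
  refine fun x y ↦ stmt_7_general h1 h2 ?_ ?_ <;> simp only [orthogonal_coordSubspace]
  · exact coordSubspace_inf_ne_bot ⟨⟨m', by omega⟩, hm'm, lt_irrefl m'⟩
  · exact coordSubspace_inf_ne_bot ⟨⟨m, by omega⟩, lt_irrefl m, hm'm.not_gt⟩
end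

section
/- Let R > 0, let m, n ≥ 1 be integers, and let c > 0 be a constant such that sin(θ) ≤ c·sin(θ − π/4) for all θ ∈ [π/3, π/2]. Let h : (R, ∞) × [0, π/2] → [0, ∞] be measurable and such that for each r ∈ (R, ∞) the map θ ↦ h(r, θ) is nonincreasing on [0, π/2]. Then ∫_R^∞ ∫_{π/3}^{π/2} r^{m+n−1}·cos(θ)^{m−1}·sin(θ)^{n−1}·h(r, θ) dθ dr ≤ c^{n−1} · ∫_R^∞ ∫_0^{π/3} r^{m+n−1}·cos(θ)^{m−1}·sin(θ)^{n−1}·h(r, θ) dθ dr, where the integrals are (possibly infinite) Lebesgue integrals of nonnegative functions. -/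
open Set Real MeasureTheory
open scoped ENNReal

/-! Shifting `θ` to `θ - π / 4` preserves Lebesgue measure and maps `[π / 3, π / 2]` into
`[0, π / 3]`. Under this shift `cos` and the nonincreasing function `h r` can only increase, while
`sin` loses at most the factor `c`. Hence the weighted integrand at `θ` is at most `c ^ (n - 1)`
times its value at `θ - π / 4`, for every fixed `r`. -/

section MeasurePreserving

variable {α β : Type*} [MeasurableSpace α] [MeasurableSpace β] {μ : Measure α} {ν : Measure β}

lemma setLIntegral_le_of_le_comp_measurePreserving {τ : α → β} (hτ : MeasurePreserving τ μ ν)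
    (hτ_emb : MeasurableEmbedding τ) {s : Set α} {t : Set β} (hs : MeasurableSet s)
    (hst : MapsTo τ s t) {f : α → ℝ≥0∞} {g : β → ℝ≥0∞} (hfg : ∀ x ∈ s, f x ≤ g (τ x)) :
    ∫⁻ x in s, f x ∂μ ≤ ∫⁻ y in t, g y ∂ν :=
  calc
    ∫⁻ x in s, f x ∂μ ≤ ∫⁻ x in s, g (τ x) ∂μ := setLIntegral_mono' hs hfg
    _ ≤ ∫⁻ x in τ ⁻¹' t, g (τ x) ∂μ := lintegral_mono_set hst
    _ = ∫⁻ y in t, g y ∂ν := hτ.setLIntegral_comp_preimage_emb hτ_emb g t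

lemma setLIntegral_mul_le_of_antitoneOn [Preorder α] {τ : α → α} (hτ : MeasurePreserving τ μ μ)
    (hτ_emb : MeasurableEmbedding τ) {s t T : Set α} (hs : MeasurableSet s) (hst : MapsTo τ s t)
    (hsT : s ⊆ T) (htT : t ⊆ T) (hτ_le : ∀ x ∈ s, τ x ≤ x) {C : ℝ≥0∞} (hC : C ≠ ∞)
    {u v g : α → ℝ≥0∞} (huv : ∀ x ∈ s, u x ≤ C * v (τ x)) (hg : AntitoneOn g T) :
    ∫⁻ x in s, u x * g x ∂μ ≤ C * ∫⁻ x in t, v x * g x ∂μ := by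
  rw [← lintegral_const_mul' _ _ hC]
  refine setLIntegral_le_of_le_comp_measurePreserving hτ hτ_emb hs hst fun x hx => ?_
  calc
    u x * g x ≤ C * v (τ x) * g (τ x) :=
      mul_le_mul' (huv x hx) (hg (htT (hst hx)) (hsT hx) (hτ_le x hx))
    _ = C * (v (τ x) * g (τ x)) := mul_assoc ..

end MeasurePreserving

lemma ofReal_mul_cos_pow_mul_sin_pow_le {w c δ θ : ℝ} (hw : 0 ≤ w) (hδ : 0 ≤ δ) (hδθ : δ ≤ θ)
    (hθ : θ ≤ π / 2) (hsin : sin θ ≤ c * sin (θ - δ)) (a b : ℕ) :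
    ENNReal.ofReal (w * cos θ ^ a * sin θ ^ b) ≤
      ENNReal.ofReal (c ^ b) * ENNReal.ofReal (w * cos (θ - δ) ^ a * sin (θ - δ) ^ b) := by
  have hcos_nonneg : 0 ≤ cos θ := cos_nonneg_of_mem_Icc ⟨by linarith [pi_pos], hθ⟩
  have hcos : cos θ ≤ cos (θ - δ) :=
    cos_le_cos_of_nonneg_of_le_pi (by linarith) (by linarith [pi_pos]) (by linarith)
  have hcos_shift_nonneg : 0 ≤ cos (θ - δ) := hcos_nonneg.trans hcos
  have hsin_nonneg : 0 ≤ sin θ := sin_nonneg_of_nonneg_of_le_pi (by linarith) (by linarith)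
  have hsin_shift_nonneg : 0 ≤ sin (θ - δ) :=
    sin_nonneg_of_nonneg_of_le_pi (by linarith) (by linarith)
  rw [← ENNReal.ofReal_mul' (by positivity)]
  refine ENNReal.ofReal_le_ofReal ?_
  calc
    w * cos θ ^ a * sin θ ^ b ≤ w * cos (θ - δ) ^ a * (c * sin (θ - δ)) ^ b := by gcongr
    _ = c ^ b * (w * cos (θ - δ) ^ a * sin (θ - δ) ^ b) := by ring

theorem stmt_11_general {X : Type*} [MeasurableSpace X] {μ : Measure X} {w : X → ℝ}
    (hw : ∀ᵐ x ∂μ, 0 ≤ w x) (a b : ℕ) {c : ℝ}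
    (hsin : ∀ θ ∈ Icc (π / 3) (π / 2), sin θ ≤ c * sin (θ - π / 4)) {h : X → ℝ → ℝ≥0∞}
    (hmono : ∀ᵐ x ∂μ, AntitoneOn (h x) (Icc 0 (π / 2))) :
    ∫⁻ x, (∫⁻ θ in Icc (π / 3) (π / 2),
        ENNReal.ofReal (w x * cos θ ^ a * sin θ ^ b) * h x θ) ∂μ
      ≤ ENNReal.ofReal (c ^ b) *
        ∫⁻ x, (∫⁻ θ in Icc 0 (π / 3),
          ENNReal.ofReal (w x * cos θ ^ a * sin θ ^ b) * h x θ) ∂μ := by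
  have hpi := pi_pos
  have hshift : MapsTo (fun θ => θ - π / 4) (Icc (π / 3) (π / 2)) (Icc 0 (π / 3)) :=
    fun θ hθ => ⟨by linarith [hθ.1], by linarith [hθ.2]⟩
  rw [← lintegral_const_mul' _ _ ENNReal.ofReal_ne_top]
  refine lintegral_mono_ae ?_
  filter_upwards [hw, hmono] with x hwx hx
  exact setLIntegral_mul_le_of_antitoneOn (measurePreserving_sub_right volume (π / 4))
    (measurableEmbedding_subRight (π / 4)) measurableSet_Icc hshift
    (Icc_subset_Icc_left (by positivity)) (Icc_subset_Icc_right (by linarith))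
    (fun θ _ => sub_le_self θ (by positivity)) ENNReal.ofReal_ne_top
    (fun θ hθ => ofReal_mul_cos_pow_mul_sin_pow_le hwx (by positivity) (by linarith [hθ.1])
      hθ.2 (hsin θ hθ) a b) hx

/-- for `h ≥ 0` measurable, nonincreasing in `θ` on `[0, π/2]` for each
`r > R`, and a constant `c > 0` with `sin θ ≤ c·sin(θ − π/4)` on `[π/3, π/2]`, the part
of the weighted integral over `θ ∈ [π/3, π/2]` is controlled by `c^(n−1)` times the part
over `θ ∈ [0, π/3]`. -/
theorem stmt_11 (R : ℝ) (hR : 0 < R) (m n : ℕ) (hm : 1 ≤ m) (hn : 1 ≤ n)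
    (c : ℝ) (hc : 0 < c)
    (hsin : ∀ θ ∈ Icc (π / 3) (π / 2), Real.sin θ ≤ c * Real.sin (θ - π / 4))
    (h : ℝ → ℝ → ℝ≥0∞) (hmeas : Measurable (Function.uncurry h))
    (hmono : ∀ r ∈ Ioi R, AntitoneOn (h r) (Icc 0 (π / 2))) :
    ∫⁻ r in Ioi R, ∫⁻ θ in Icc (π / 3) (π / 2),
        ENNReal.ofReal
            (r ^ (m + n - 1) * Real.cos θ ^ (m - 1) * Real.sin θ ^ (n - 1)) * h r θ
      ≤ ENNReal.ofReal (c ^ (n - 1)) *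
        ∫⁻ r in Ioi R, ∫⁻ θ in Icc 0 (π / 3),
          ENNReal.ofReal
            (r ^ (m + n - 1) * Real.cos θ ^ (m - 1) * Real.sin θ ^ (n - 1)) * h r θ :=
  stmt_11_general
    (ae_restrict_of_forall_mem measurableSet_Ioi fun _ hr => pow_nonneg (hR.trans hr).le _)
    (m - 1) (n - 1) hsin (ae_restrict_of_forall_mem measurableSet_Ioi hmono)
end
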